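/- A hemiring S is h-hemiregular if and only if for every right h-ideal A and every left h-ideal B of S, the h-closure of AB equals A ∩ B. -/

import Mathlib

open scoped BigOperators

variable {S : Type*}

def IsFuzzySet (μ : S → ℝ) : Prop := ∀ x, μ x ∈ Set.Icc (0:ℝ) 1

def IsFuzzyLeftHIdeal [NonUnitalSemiring S] (μ : S → ℝ) : Prop :=
  IsFuzzySet μ ∧
  (∀ x y : S, min (μ x) (μ y) ≤ μ (x + y)) ∧
  (∀ x y : S, μ y ≤ μ (x * y)) ∧
  (∀ a b x z : S, x + a + z = b + z → min (μ a) (μ b) ≤ μ x)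

def IsFuzzyRightHIdeal [NonUnitalSemiring S] (μ : S → ℝ) : Prop :=
  IsFuzzySet μ ∧
  (∀ x y : S, min (μ x) (μ y) ≤ μ (x + y)) ∧
  (∀ x y : S, μ x ≤ μ (x * y)) ∧
  (∀ a b x z : S, x + a + z = b + z → min (μ a) (μ b) ≤ μ x)

/-- The h-product of two fuzzy sets (equal to 0 when no representation exists). -/
noncomputable def hProd [NonUnitalSemiring S] (μ ν : S → ℝ) (x : S) : ℝ :=
  sSup (insert 0 {r | ∃ a₁ b₁ a₂ b₂ z : S, x + a₁ * b₁ + z = a₂ * b₂ + z ∧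
    r = min (min (μ a₁) (μ a₂)) (min (ν b₁) (ν b₂))})

def IsLeftHIdeal [NonUnitalSemiring S] (A : Set S) : Prop :=
  A.Nonempty ∧ (∀ a ∈ A, ∀ b ∈ A, a + b ∈ A) ∧ (∀ s : S, ∀ a ∈ A, s * a ∈ A) ∧
  (∀ x z a b : S, a ∈ A → b ∈ A → x + a + z = b + z → x ∈ A)

def IsRightHIdeal [NonUnitalSemiring S] (A : Set S) : Prop :=
  A.Nonempty ∧ (∀ a ∈ A, ∀ b ∈ A, a + b ∈ A) ∧ (∀ s : S, ∀ a ∈ A, a * s ∈ A) ∧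
  (∀ x z a b : S, a ∈ A → b ∈ A → x + a + z = b + z → x ∈ A)

/-- h-closure of a subset of a hemiring. -/
def hCl [NonUnitalSemiring S] (A : Set S) : Set S :=
  {x | ∃ a₁ ∈ A, ∃ a₂ ∈ A, ∃ z : S, x + a₁ + z = a₂ + z}

/-- AB : the set of finite (nonempty) sums of products ab, a ∈ A, b ∈ B. -/
def setProd [NonUnitalSemiring S] (A B : Set S) : Set S :=
  {x | ∃ (n : ℕ) (a b : Fin (n + 1) → S), (∀ i, a i ∈ A) ∧ (∀ i, b i ∈ B) ∧
    x = ∑ i, a i * b i}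

def IsPrimeLeftHIdeal [NonUnitalSemiring S] (P : Set S) : Prop :=
  IsLeftHIdeal P ∧ P ≠ Set.univ ∧
  ∀ A B : Set S, IsLeftHIdeal A → IsLeftHIdeal B → setProd A B ⊆ P → A ⊆ P ∨ B ⊆ P

def IsPrimeFuzzyLeftHIdeal [NonUnitalSemiring S] (ζ : S → ℝ) : Prop :=
  IsFuzzyLeftHIdeal ζ ∧ (∃ x y : S, ζ x ≠ ζ y) ∧
  ∀ μ ν : S → ℝ, IsFuzzyLeftHIdeal μ → IsFuzzyLeftHIdeal ν →
    (∀ x, hProd μ ν x ≤ ζ x) → (∀ x, μ x ≤ ζ x) ∨ (∀ x, ν x ≤ ζ x)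

def IsHHemiregular (S : Type*) [NonUnitalSemiring S] : Prop :=
  ∀ a : S, ∃ x₁ x₂ z : S, a + a * x₁ * a + z = a * x₂ * a + z

/-- The h-closure of an additive submonoid, as an additive submonoid. -/
def clM [NonUnitalSemiring S] (M : AddSubmonoid S) : AddSubmonoid S where
  carrier := hCl (M : Set S)
  zero_mem' := ⟨0, M.zero_mem, 0, M.zero_mem, 0, by simp⟩
  add_mem' := by
    rintro x y ⟨a, ha, b, hb, z, h⟩ ⟨c, hc, d, hd, w, h'⟩
    refine ⟨a + c, M.add_mem ha hc, b + d, M.add_mem hb hd, z + w, ?_⟩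
    calc x + y + (a + c) + (z + w) = (x + a + z) + (y + c + w) := by abel
      _ = (b + z) + (d + w) := by rw [h, h']
      _ = _ := by abel

lemma clM_closed [NonUnitalSemiring S] (M : AddSubmonoid S) (x z a b : S)
    (ha : a ∈ clM M) (hb : b ∈ clM M) (h : x + a + z = b + z) : x ∈ clM M := by
  obtain ⟨a₁, ha₁, a₂, ha₂, u, hu⟩ := ha
  obtain ⟨b₁, hb₁, b₂, hb₂, v, hv⟩ := hb
  refine ⟨a₂ + b₁, M.add_mem ha₂ hb₁, a₁ + b₂, M.add_mem ha₁ hb₂, z + u + v, ?_⟩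
  calc x + (a₂ + b₁) + (z + u + v) = (a₂ + u) + (x + z + b₁ + v) := by abel
    _ = (x + a + z) + a₁ + u + b₁ + v := by rw [← hu]; abel
    _ = (b + b₁ + v) + z + a₁ + u := by rw [h]; abel
    _ = _ := by rw [hv]; abel

/-- The h-closed additive submonoid generated by a set. -/
def hGen [NonUnitalSemiring S] (X : Set S) : AddSubmonoid S := clM (AddSubmonoid.closure X)

lemma le_clM [NonUnitalSemiring S] (M : AddSubmonoid S) {x : S} (hx : x ∈ M) : x ∈ clM M :=
  ⟨0, M.zero_mem, x, hx, 0, by simp⟩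

lemma sub_hGen [NonUnitalSemiring S] {X : Set S} {x : S} (hx : x ∈ X) : x ∈ hGen X :=
  le_clM _ (AddSubmonoid.subset_closure hx)

lemma hGen_map [NonUnitalSemiring S] {X Y : Set S} (f : S →+ S) (h : ∀ x ∈ X, f x ∈ hGen Y)
    {x : S} (hx : x ∈ hGen X) : f x ∈ hGen Y := by
  have key : AddSubmonoid.closure X ≤ (hGen Y).comap f := (AddSubmonoid.closure_le).2 h
  obtain ⟨a, ha, b, hb, z, e⟩ := hx
  refine clM_closed _ (f x) (f z) (f a) (f b) (key ha) (key hb) ?_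
  rw [← map_add, ← map_add, e, map_add]

lemma hCl_setProd_sub [NonUnitalSemiring S] {A B Y : Set S}
    (h : ∀ a ∈ A, ∀ b ∈ B, a * b ∈ hGen Y) {x : S} (hx : x ∈ hCl (setProd A B)) :
    x ∈ hGen Y := by
  have key : ∀ y ∈ setProd A B, y ∈ hGen Y := by
    rintro y ⟨n, a, b, ha, hb, rfl⟩
    exact sum_mem fun i _ => h _ (ha i) _ (hb i)
  obtain ⟨a, ha, b, hb, z, e⟩ := hx
  exact clM_closed _ x z a b (key _ ha) (key _ hb) e

lemma hGen_right [NonUnitalSemiring S] {X : Set S} (h : ∀ x ∈ X, ∀ s, x * s ∈ hGen X) :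
    IsRightHIdeal (hGen X : Set S) :=
  ⟨⟨0, zero_mem _⟩, fun _ ha _ hb => add_mem ha hb,
    fun s _ ha => hGen_map (AddMonoidHom.mulRight s) (fun x hx => h x hx s) ha,
    fun x z a b ha hb e => clM_closed _ x z a b ha hb e⟩

lemma hGen_left [NonUnitalSemiring S] {X : Set S} (h : ∀ x ∈ X, ∀ s, s * x ∈ hGen X) :
    IsLeftHIdeal (hGen X : Set S) :=
  ⟨⟨0, zero_mem _⟩, fun _ ha _ hb => add_mem ha hb,
    fun s _ ha => hGen_map (AddMonoidHom.mulLeft s) (fun x hx => h x hx s) ha,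
    fun x z a b ha hb e => clM_closed _ x z a b ha hb e⟩

theorem hHemiregular_iff_hCl_setProd_eq_inter [NonUnitalSemiring S] :
    IsHHemiregular S ↔
      ∀ A B : Set S, IsRightHIdeal A → IsLeftHIdeal B →
        hCl (setProd A B) = A ∩ B := by
  constructor
  · intro H A B ⟨_, hA, hAs, hAc⟩ ⟨_, hB, hBs, hBc⟩
    have sumA : ∀ (T : Set S), (∀ a ∈ T, ∀ b ∈ T, a + b ∈ T) → ∀ (n : ℕ) (f : Fin (n + 1) → S),
        (∀ i, f i ∈ T) → ∑ i, f i ∈ T := by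
      intro T hT n
      induction n with
      | zero => intro f hf; simpa using hf 0
      | succ n ih =>
        intro f hf
        rw [Fin.sum_univ_succ]
        exact hT _ (hf 0) _ (ih _ fun i => hf _)
    ext x
    constructor
    · rintro ⟨_, ⟨n, a, b, ha, hb, rfl⟩, _, ⟨m, c, d, hc, hd, rfl⟩, z, e⟩
      exact ⟨hAc _ _ _ _ (sumA A hA _ _ fun i => hAs _ _ (ha i))
          (sumA A hA _ _ fun i => hAs _ _ (hc i)) e,
        hBc _ _ _ _ (sumA B hB _ _ fun i => hBs _ _ (hb i))
          (sumA B hB _ _ fun i => hBs _ _ (hd i)) e⟩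
    · rintro ⟨hxA, hxB⟩
      obtain ⟨u, v, z, e⟩ := H x
      exact ⟨x * u * x, ⟨0, fun _ => x * u, fun _ => x, fun _ => hAs _ _ hxA, fun _ => hxB,
          by simp⟩,
        x * v * x, ⟨0, fun _ => x * v, fun _ => x, fun _ => hAs _ _ hxA, fun _ => hxB,
          by simp⟩, z, e⟩
  · intro H a
    have uR : IsRightHIdeal (Set.univ : Set S) := by simp [IsRightHIdeal]
    have uL : IsLeftHIdeal (Set.univ : Set S) := by simp [IsLeftHIdeal]
    have aR : a ∈ hGen (Set.range fun s => a * s) := by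
      have hR : IsRightHIdeal (hGen (insert a (Set.range fun s => a * s)) : Set S) := by
        apply hGen_right
        rintro x (rfl | ⟨t, rfl⟩) s
        · exact sub_hGen (Or.inr ⟨s, rfl⟩)
        · exact sub_hGen (Or.inr ⟨t * s, (mul_assoc _ _ _).symm⟩)
      have h1 := H _ _ hR uL
      have h2 : a ∈ hCl (setProd (hGen (insert a (Set.range fun s => a * s)) : Set S)
          Set.univ) := by
        rw [h1]; exact ⟨sub_hGen (Or.inl rfl), trivial⟩
      refine hCl_setProd_sub ?_ h2
      intro p hp s _
      refine hGen_map (AddMonoidHom.mulRight s) ?_ hp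
      rintro x (rfl | ⟨t, rfl⟩)
      · exact sub_hGen ⟨s, rfl⟩
      · exact sub_hGen ⟨t * s, (mul_assoc _ _ _).symm⟩
    have aL : a ∈ hGen (Set.range fun s => s * a) := by
      have hL : IsLeftHIdeal (hGen (insert a (Set.range fun s => s * a)) : Set S) := by
        apply hGen_left
        rintro x (rfl | ⟨t, rfl⟩) s
        · exact sub_hGen (Or.inr ⟨s, rfl⟩)
        · exact sub_hGen (Or.inr ⟨s * t, mul_assoc _ _ _⟩)
      have h1 := H _ _ uR hL
      have h2 : a ∈ hCl (setProd Set.univ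
          (hGen (insert a (Set.range fun s => s * a)) : Set S)) := by
        rw [h1]; exact ⟨trivial, sub_hGen (Or.inl rfl)⟩
      refine hCl_setProd_sub ?_ h2
      intro s _ p hp
      refine hGen_map (AddMonoidHom.mulLeft s) ?_ hp
      rintro x (rfl | ⟨t, rfl⟩)
      · exact sub_hGen ⟨s, rfl⟩
      · exact sub_hGen ⟨s * t, mul_assoc _ _ _⟩
    have hR : IsRightHIdeal (hGen (Set.range fun s => a * s) : Set S) := by
      apply hGen_right
      rintro x ⟨t, rfl⟩ s
      exact sub_hGen ⟨t * s, (mul_assoc _ _ _).symm⟩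
    have hL : IsLeftHIdeal (hGen (Set.range fun s => s * a) : Set S) := by
      apply hGen_left
      rintro x ⟨t, rfl⟩ s
      exact sub_hGen ⟨s * t, mul_assoc _ _ _⟩
    have h2 : a ∈ hCl (setProd (hGen (Set.range fun s => a * s) : Set S)
        (hGen (Set.range fun s => s * a) : Set S)) := by
      rw [H _ _ hR hL]; exact ⟨aR, aL⟩
    have h3 : a ∈ hGen (Set.range fun s => a * s * a) := by
      refine hCl_setProd_sub ?_ h2
      intro p hp q hq
      refine hGen_map (AddMonoidHom.mulRight q) ?_ hp
      rintro _ ⟨s, rfl⟩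
      refine hGen_map (AddMonoidHom.mulLeft (a * s)) ?_ hq
      rintro _ ⟨t, rfl⟩
      exact sub_hGen ⟨s * t, by simp [mul_assoc]⟩
    have key : ∀ y ∈ AddSubmonoid.closure (Set.range fun s => a * s * a),
        ∃ s, y = a * s * a := by
      intro y hy
      induction hy using AddSubmonoid.closure_induction with
      | mem x hx => obtain ⟨s, rfl⟩ := hx; exact ⟨s, rfl⟩
      | zero => exact ⟨0, by simp⟩
      | add x y _ _ hx hy =>
        obtain ⟨s, rfl⟩ := hx
        obtain ⟨t, rfl⟩ := hy
        exact ⟨s + t, by rw [mul_add, add_mul]⟩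
    obtain ⟨b, hb, c, hc, z, e⟩ := h3
    obtain ⟨s, rfl⟩ := key b hb
    obtain ⟨t, rfl⟩ := key c hc
    exact ⟨s, t, z, e⟩
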